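/- Suppose a sequence u_k ∈ H_0^1(B) with ‖∇u_k‖_2 = 1 satisfies: for every sequence ζ_k ∈ B, u_k ∘ η_{ζ_k} ⇀ 0 weakly in H_0^1(B). Then for every F ∈ C(ℝ) with |F(s)| ≤ C|s|^r e^{p s²} for some C > 0, r > 2, p < 4π, one has ∫_B F(u_k) dμ → 0. -/

import Mathlib

open MeasureTheory Real Filter Set Metric
open scoped Topology RealInnerProductSpace ENNReal

noncomputable section

/-- The open unit disk in `ℂ`. -/
def unitDisk : Set ℂ := {z : ℂ | ‖z‖ < 1}

/-- The Möbius transformation `η_ζ(z) = (z - ζ)/(1 - conj(ζ)·z)`. -/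
def eta (ζ z : ℂ) : ℂ := (z - ζ) / (1 - (starRingEnd ℂ) ζ * z)

lemma isOpen_unitDisk : IsOpen unitDisk := isOpen_lt continuous_norm continuous_const

lemma measurableSet_unitDisk : MeasurableSet unitDisk := isOpen_unitDisk.measurableSet

lemma neg_mem_unitDisk {z : ℂ} (hz : z ∈ unitDisk) : -z ∈ unitDisk := by
  simpa [unitDisk] using hz

lemma one_sub_normSq_pos {z : ℂ} (hz : z ∈ unitDisk) : 0 < 1 - ‖z‖ ^ 2 := by
  have h : ‖z‖ < 1 := hz
  nlinarith [norm_nonneg z]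

lemma eta_denom_ne {ζ z : ℂ} (hζ : ζ ∈ unitDisk) (hz : z ∈ unitDisk) :
    1 - (starRingEnd ℂ) ζ * z ≠ 0 := by
  intro h
  have h1 : ‖(starRingEnd ℂ) ζ * z‖ = 1 := by
    rw [← sub_eq_zero.mp h, norm_one]
  rw [norm_mul, RCLike.norm_conj] at h1
  have a : ‖ζ‖ < 1 := hζ
  have b : ‖z‖ < 1 := hz
  nlinarith [norm_nonneg z, norm_nonneg ζ]

lemma normSq_eta_denom_sub (ζ z : ℂ) :
    ‖1 - (starRingEnd ℂ) ζ * z‖ ^ 2 - ‖z - ζ‖ ^ 2 = (1 - ‖ζ‖ ^ 2) * (1 - ‖z‖ ^ 2) := by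
  simp only [← Complex.normSq_eq_norm_sq, Complex.normSq_apply]
  simp
  ring

lemma one_sub_normSq_eta {ζ z : ℂ} (hζ : ζ ∈ unitDisk) (hz : z ∈ unitDisk) :
    1 - ‖eta ζ z‖ ^ 2 = (1 - ‖ζ‖ ^ 2) * (1 - ‖z‖ ^ 2) / ‖1 - (starRingEnd ℂ) ζ * z‖ ^ 2 := by
  have h := norm_ne_zero_iff.mpr (eta_denom_ne hζ hz)
  rw [eta, norm_div, ← normSq_eta_denom_sub, div_pow, sub_div, div_self (pow_ne_zero 2 h)]

lemma eta_mem {ζ z : ℂ} (hζ : ζ ∈ unitDisk) (hz : z ∈ unitDisk) : eta ζ z ∈ unitDisk := by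
  have h : 0 < 1 - ‖eta ζ z‖ ^ 2 := by
    rw [one_sub_normSq_eta hζ hz]
    have h := norm_pos_iff.mpr (eta_denom_ne hζ hz)
    have := one_sub_normSq_pos hζ
    have := one_sub_normSq_pos hz
    positivity
  show ‖eta ζ z‖ < 1
  nlinarith [norm_nonneg (eta ζ z)]

lemma eta_eta_neg {ζ z : ℂ} (hζ : ζ ∈ unitDisk) (hz : z ∈ unitDisk) :
    eta ζ (eta (-ζ) z) = z := by
  have h1 := eta_denom_ne (neg_mem_unitDisk hζ) hz
  have h2 := eta_denom_ne hζ hζ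
  have h4 : z - -ζ - ζ * (1 - (starRingEnd ℂ) (-ζ) * z) = z * (1 - (starRingEnd ℂ) ζ * ζ) := by
    simp only [map_neg]; ring
  have h5 : 1 - (starRingEnd ℂ) (-ζ) * z - (starRingEnd ℂ) ζ * (z - -ζ)
      = 1 - (starRingEnd ℂ) ζ * ζ := by
    simp only [map_neg]; ring
  unfold eta
  rw [div_sub' h1, mul_div_assoc', one_sub_div h1, div_div_div_cancel_right₀ h1, h5,
    mul_comm _ ζ, h4, mul_div_cancel_right₀ _ h2]

lemma eta_neg_eta {ζ z : ℂ} (hζ : ζ ∈ unitDisk) (hz : z ∈ unitDisk) :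
    eta (-ζ) (eta ζ z) = z := by
  simpa using eta_eta_neg (neg_mem_unitDisk hζ) hz

lemma eta_zero (ζ : ℂ) : eta ζ 0 = -ζ := by simp [eta]

lemma norm_eta_comm (ζ z : ℂ) : ‖eta ζ z‖ = ‖eta z ζ‖ := by
  have h : 1 - (starRingEnd ℂ) ζ * z = (starRingEnd ℂ) (1 - (starRingEnd ℂ) z * ζ) := by
    simp [mul_comm]
  rw [eta, eta, norm_div, norm_div, norm_sub_rev, h, RCLike.norm_conj]

/-- The complex derivative of `eta ζ`. -/
def etaDeriv (ζ z : ℂ) : ℂ := (1 - (‖ζ‖ : ℂ) ^ 2) / (1 - (starRingEnd ℂ) ζ * z) ^ 2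

lemma hasDerivAt_eta {ζ z : ℂ} (hζ : ζ ∈ unitDisk) (hz : z ∈ unitDisk) :
    HasDerivAt (eta ζ) (etaDeriv ζ z) z := by
  have h := eta_denom_ne hζ hz
  have h1 : HasDerivAt (fun z : ℂ => z - ζ) 1 z := (hasDerivAt_id z).sub_const ζ
  have h2 : HasDerivAt (fun z : ℂ => 1 - (starRingEnd ℂ) ζ * z) (-((starRingEnd ℂ) ζ)) z := by
    simpa using ((hasDerivAt_id z).const_mul ((starRingEnd ℂ) ζ)).const_sub 1
  have h3 : etaDeriv ζ z = (1 * (1 - (starRingEnd ℂ) ζ * z) - (z - ζ) * (-(starRingEnd ℂ) ζ))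
      / (1 - (starRingEnd ℂ) ζ * z) ^ 2 := by
    rw [etaDeriv, ← Complex.conj_mul']
    congr 1
    ring
  rw [h3]
  exact h1.div h2 h

lemma norm_etaDeriv {ζ z : ℂ} (hζ : ζ ∈ unitDisk) (hz : z ∈ unitDisk) :
    ‖etaDeriv ζ z‖ * (1 - ‖z‖ ^ 2) = 1 - ‖eta ζ z‖ ^ 2 := by
  rw [one_sub_normSq_eta hζ hz, etaDeriv, norm_div, norm_pow]
  have : ‖(1 - (‖ζ‖ : ℂ) ^ 2)‖ = 1 - ‖ζ‖ ^ 2 := by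
    rw [← Complex.ofReal_pow, ← Complex.ofReal_one, ← Complex.ofReal_sub, Complex.norm_real,
      Real.norm_of_nonneg (one_sub_normSq_pos hζ).le]
  rw [this]
  ring

lemma norm_etaDeriv_pos {ζ z : ℂ} (hζ : ζ ∈ unitDisk) (hz : z ∈ unitDisk) : 0 < ‖etaDeriv ζ z‖ := by
  have h := norm_etaDeriv hζ hz
  have h1 := one_sub_normSq_pos (eta_mem hζ hz)
  rw [← h] at h1
  exact pos_of_mul_pos_left h1 (one_sub_normSq_pos hz).le

lemma image_eta {ζ : ℂ} (hζ : ζ ∈ unitDisk) : eta ζ '' unitDisk = unitDisk := by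
  ext z
  constructor
  · rintro ⟨w, hw, rfl⟩
    exact eta_mem hζ hw
  · intro hz
    exact ⟨eta (-ζ) z, eta_mem (neg_mem_unitDisk hζ) hz, eta_eta_neg hζ hz⟩

lemma lintegral_comp_eta {ζ : ℂ} (hζ : ζ ∈ unitDisk) (g : ℂ → ℝ≥0∞) :
    ∫⁻ z in unitDisk, ENNReal.ofReal (‖etaDeriv ζ z‖ ^ 2) * g (eta ζ z)
      = ∫⁻ z in unitDisk, g z := by
  have h := lintegral_image_eq_lintegral_abs_det_fderiv_mul volume measurableSet_unitDisk
    (f := eta ζ)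
    (fun x hx => ((hasDerivAt_eta hζ hx).hasFDerivAt.restrictScalars ℝ).hasFDerivWithinAt)
    (fun x hx y hy hxy => by rw [← eta_neg_eta hζ hx, hxy, eta_neg_eta hζ hy]) g
  rw [image_eta hζ] at h
  rw [h]
  refine setLIntegral_congr_fun measurableSet_unitDisk fun x hx => ?_
  congr 2
  have h2 : (ContinuousLinearMap.restrictScalars ℝ
      (ContinuousLinearMap.toSpanSingleton ℂ (etaDeriv ζ x))).det = ‖etaDeriv ζ x‖ ^ 2 := by
    simp [ContinuousLinearMap.det, LinearMap.det_restrictScalars,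
      Algebra.norm_complex_eq, Complex.normSq_eq_norm_sq]
  rw [h2, abs_of_nonneg (by positivity)]

/-- The hyperbolic measure on the unit disk. -/
def hypMeasure : Measure ℂ :=
  (volume.restrict unitDisk).withDensity fun z => ENNReal.ofReal (1 / (1 - ‖z‖ ^ 2) ^ 2)

lemma lintegral_hypMeasure (g : ℂ → ℝ≥0∞) :
    ∫⁻ z, g z ∂hypMeasure
      = ∫⁻ z in unitDisk, ENNReal.ofReal (1 / (1 - ‖z‖ ^ 2) ^ 2) * g z := by
  rw [hypMeasure, lintegral_withDensity_eq_lintegral_mul_non_measurable _ (by fun_prop)]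
  · rfl
  · exact ae_of_all _ fun _ => ENNReal.ofReal_lt_top

instance : SFinite hypMeasure := by unfold hypMeasure; infer_instance

lemma ae_mem_unitDisk : ∀ᵐ z ∂hypMeasure, z ∈ unitDisk :=
  (withDensity_absolutelyContinuous _ _).ae_le (ae_restrict_mem measurableSet_unitDisk)

lemma lintegral_hypMeasure_comp_eta {ζ : ℂ} (hζ : ζ ∈ unitDisk) (g : ℂ → ℝ≥0∞) :
    ∫⁻ z, g (eta ζ z) ∂hypMeasure = ∫⁻ z, g z ∂hypMeasure := by
  rw [lintegral_hypMeasure, lintegral_hypMeasure, ← lintegral_comp_eta hζ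
    fun z => ENNReal.ofReal (1 / (1 - ‖z‖ ^ 2) ^ 2) * g z]
  refine setLIntegral_congr_fun measurableSet_unitDisk fun z hz => ?_
  rw [← mul_assoc, ← ENNReal.ofReal_mul (by positivity), ← norm_etaDeriv hζ hz]
  congr 2
  have := (norm_etaDeriv_pos hζ hz).ne'
  have := (one_sub_normSq_pos hz).ne'
  field_simp

lemma gradient_comp_eta {u : ℂ → ℝ} (hu : ContDiff ℝ 1 u) {ζ z : ℂ} (hζ : ζ ∈ unitDisk)
    (hz : z ∈ unitDisk) :
    ‖gradient (fun y => u (eta ζ y)) z‖ = ‖etaDeriv ζ z‖ * ‖gradient u (eta ζ z)‖ := by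
  have h1 : HasFDerivAt u (fderiv ℝ u (eta ζ z)) (eta ζ z) :=
    ((hu.differentiable one_ne_zero) _).hasFDerivAt
  have h2 := h1.comp z ((hasDerivAt_eta hζ hz).hasFDerivAt.restrictScalars ℝ)
  have h3 : HasGradientAt (fun y => u (eta ζ y))
      ((starRingEnd ℂ) (etaDeriv ζ z) * gradient u (eta ζ z)) z := by
    rw [hasGradientAt_iff_hasFDerivAt]
    refine h2.congr_fderiv (ContinuousLinearMap.ext fun w => Eq.symm ?_)
    change inner ℝ ((starRingEnd ℂ) (etaDeriv ζ z) * gradient u (eta ζ z)) w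
      = fderiv ℝ u (eta ζ z) (w * etaDeriv ζ z)
    rw [← inner_gradient_left, Complex.inner, Complex.inner, map_mul, Complex.conj_conj]
    congr 1
    ring
  rw [h3.gradient, norm_mul, RCLike.norm_conj]

lemma exists_contDiff_extension_comp_eta {u : ℂ → ℝ} (hu : ContDiff ℝ 1 u)
    (hs : tsupport u ⊆ unitDisk) {ζ : ℂ} (hζ : ζ ∈ unitDisk) :
    ∃ w : ℂ → ℝ, ContDiff ℝ 1 w ∧ tsupport w ⊆ unitDisk ∧
      ∀ z ∈ unitDisk, w z = u (eta ζ z) := by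
  have hcs : IsCompact (tsupport u) := by
    refine IsCompact.of_isClosed_subset (isCompact_closedBall (0 : ℂ) 1) (isClosed_tsupport u) ?_
    intro z hz
    have h : ‖z‖ < 1 := hs hz
    simpa using h.le
  have hK : IsCompact (eta (-ζ) '' tsupport u) := by
    refine hcs.image_of_continuousOn fun z hz => ?_
    exact (hasDerivAt_eta (neg_mem_unitDisk hζ) (hs hz)).continuousAt.continuousWithinAt
  have hKB : eta (-ζ) '' tsupport u ⊆ unitDisk := by
    rintro _ ⟨z, hz, rfl⟩
    exact eta_mem (neg_mem_unitDisk hζ) (hs hz)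
  set w : ℂ → ℝ := unitDisk.indicator fun z => u (eta ζ z) with hw
  have hsupp : Function.support w ⊆ eta (-ζ) '' tsupport u := by
    intro z hz
    have hzB : z ∈ unitDisk := mem_of_indicator_ne_zero hz
    rw [Function.mem_support, hw, indicator_of_mem hzB] at hz
    exact ⟨eta ζ z, subset_closure hz, eta_neg_eta hζ hzB⟩
  have hts : tsupport w ⊆ eta (-ζ) '' tsupport u := closure_minimal hsupp hK.isClosed
  refine ⟨w, ?_, hts.trans hKB, fun z hz => indicator_of_mem hz _⟩
  rw [contDiff_iff_contDiffAt]
  intro z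
  by_cases hz : z ∈ tsupport w
  · have hzB := hKB (hts hz)
    have h1 : ContDiffAt ℝ 1 (eta ζ) z := by
      have h2 : ContDiffAt ℝ 1 (fun z : ℂ => z - ζ) z := by fun_prop
      have h3 : ContDiffAt ℝ 1 (fun z : ℂ => 1 - (starRingEnd ℂ) ζ * z) z := by fun_prop
      exact h2.mul (h3.inv (eta_denom_ne hζ hzB))
    refine (hu.contDiffAt.comp z h1).congr_of_eventuallyEq ?_
    filter_upwards [isOpen_unitDisk.mem_nhds hzB] with y hy
    exact indicator_of_mem hy _
  · refine contDiffAt_const (c := (0 : ℝ)) |>.congr_of_eventuallyEq ?_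
    exact notMem_tsupport_iff_eventuallyEq.mp hz

lemma lintegral_comp_norm (g : ℝ → ℝ≥0∞) (hg : Measurable g) :
    ∫⁻ z : ℂ, g ‖z‖ = ENNReal.ofReal (2 * π) * ∫⁻ r in Ioi (0 : ℝ), ENNReal.ofReal r * g r := by
  rw [← Complex.lintegral_comp_polarCoord_symm, polarCoord_target, Measure.volume_eq_prod,
    ← Measure.prod_restrict, mul_comm]
  have h1 : ∫⁻ p, ENNReal.ofReal p.1 • g ‖Complex.polarCoord.symm p‖
        ∂((volume.restrict (Ioi (0 : ℝ))).prod (volume.restrict (Ioo (-π) π)))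
      = ∫⁻ p, (ENNReal.ofReal p.1 * g p.1) * 1
        ∂((volume.restrict (Ioi (0 : ℝ))).prod (volume.restrict (Ioo (-π) π))) := by
    rw [Measure.prod_restrict]
    refine setLIntegral_congr_fun (measurableSet_Ioi.prod measurableSet_Ioo) fun p hp => ?_
    have h : 0 < p.1 := hp.1
    simp only [Complex.norm_polarCoord_symm, abs_of_pos h, smul_eq_mul, mul_one]
  rw [h1, lintegral_prod_mul (f := fun r => ENNReal.ofReal r * g r) (g := fun _ => 1)
    (by fun_prop) (by fun_prop)]
  congr 1
  rw [lintegral_const, Measure.restrict_apply_univ, Real.volume_Ioo, one_mul]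
  congr 1
  ring

/-- The hyperbolic size of the singular part of the gradient of the Green function, as a function
of the pseudo-hyperbolic distance. -/
def greenKernel (s ρ : ℝ) : ℝ≥0∞ :=
  if ρ < s then ENNReal.ofReal ((1 - ρ ^ 2) / (2 * π * ρ)) else 0

lemma measurable_greenKernel (s : ℝ) : Measurable (greenKernel s) := by
  unfold greenKernel
  exact Measurable.ite measurableSet_Iio (by fun_prop) measurable_const

lemma lintegral_greenKernel {s : ℝ} (hs : 0 < s) (hs1 : s < 1) :
    ∫⁻ z, greenKernel s ‖z‖ ∂hypMeasure ≤ ENNReal.ofReal (-log (1 - s)) := by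
  have hm : Measurable fun ρ : ℝ => ENNReal.ofReal (1 / (1 - ρ ^ 2) ^ 2) * greenKernel s ρ :=
    (by fun_prop : Measurable fun ρ : ℝ => ENNReal.ofReal (1 / (1 - ρ ^ 2) ^ 2)).mul
      (measurable_greenKernel s)
  calc ∫⁻ z, greenKernel s ‖z‖ ∂hypMeasure
      ≤ ∫⁻ z : ℂ, ENNReal.ofReal (1 / (1 - ‖z‖ ^ 2) ^ 2) * greenKernel s ‖z‖ := by
        rw [lintegral_hypMeasure]
        exact setLIntegral_le_lintegral _ _
    _ = ENNReal.ofReal (2 * π) * ∫⁻ r in Ioi (0 : ℝ),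
          ENNReal.ofReal r * (ENNReal.ofReal (1 / (1 - r ^ 2) ^ 2) * greenKernel s r) :=
        lintegral_comp_norm _ hm
    _ = ∫⁻ r in Ioi (0 : ℝ), ENNReal.ofReal (2 * π) *
          (ENNReal.ofReal r * (ENNReal.ofReal (1 / (1 - r ^ 2) ^ 2) * greenKernel s r)) := by
        rw [lintegral_const_mul]
        exact (by fun_prop : Measurable fun r : ℝ => ENNReal.ofReal r).mul hm
    _ ≤ ∫⁻ r in Ioi (0 : ℝ), (Iio s).indicator (fun r => ENNReal.ofReal (1 / (1 - r))) r := by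
        refine setLIntegral_mono' measurableSet_Ioi fun r hr => ?_
        have hr0 : 0 < r := hr
        unfold greenKernel
        split_ifs with h
        · rw [indicator_of_mem (show r ∈ Iio s from h), ← ENNReal.ofReal_mul (by positivity),
            ← ENNReal.ofReal_mul hr0.le, ← ENNReal.ofReal_mul (by positivity)]
          apply ENNReal.ofReal_le_ofReal
          have h1 : 0 < 1 - r := by linarith
          have h2 : 0 < 1 - r ^ 2 := by nlinarith
          have : 2 * π * (r * (1 / (1 - r ^ 2) ^ 2 * ((1 - r ^ 2) / (2 * π * r))))
              = 1 / (1 - r ^ 2) := by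
            field_simp
          rw [this]
          apply one_div_le_one_div_of_le h1
          nlinarith
        · simp
    _ = ∫⁻ r in Ioo 0 s, ENNReal.ofReal (1 / (1 - r)) := by
        rw [lintegral_indicator measurableSet_Iio, Measure.restrict_restrict measurableSet_Iio,
          inter_comm, Ioi_inter_Iio]
    _ = ENNReal.ofReal (∫ r in (0 : ℝ)..s, 1 / (1 - r)) := by
        rw [intervalIntegral.integral_of_le hs.le, integral_Ioc_eq_integral_Ioo,
          ofReal_integral_eq_lintegral_ofReal]
        · refine (ContinuousOn.integrableOn_Icc ?_).mono_set Ioo_subset_Icc_self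
          refine ContinuousOn.div (by fun_prop) (by fun_prop) fun x hx => ?_
          have := hx.2
          linarith
        · refine (ae_restrict_iff' measurableSet_Ioo).mpr (ae_of_all _ fun r hr => ?_)
          have := hr.2
          exact one_div_nonneg.mpr (by linarith)
    _ = ENNReal.ofReal (-log (1 - s)) := by
        congr 1
        rw [intervalIntegral.integral_comp_sub_left (fun x => 1 / x), integral_one_div]
        · simp [Real.log_inv]
        · simp only [sub_zero]
          rw [uIcc_of_le (by linarith)]
          intro h
          have := h.1
          linarith

lemma lintegral_annulus {s : ℝ} (hs : 0 < s) (hs1 : s < 1) :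
    ∫⁻ z : ℂ, (if s ≤ ‖z‖ ∧ ‖z‖ < 1 then ENNReal.ofReal ((1 / (2 * π * ‖z‖)) ^ 2) else 0)
      = ENNReal.ofReal (-log s / (2 * π)) := by
  have hset : MeasurableSet {r : ℝ | s ≤ r ∧ r < 1} := measurableSet_Ico
  have hm : Measurable fun r : ℝ =>
      if s ≤ r ∧ r < 1 then ENNReal.ofReal ((1 / (2 * π * r)) ^ 2) else 0 :=
    Measurable.ite hset (by fun_prop) measurable_const
  calc _ = ENNReal.ofReal (2 * π) * ∫⁻ r in Ioi (0 : ℝ), ENNReal.ofReal r *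
            (if s ≤ r ∧ r < 1 then ENNReal.ofReal ((1 / (2 * π * r)) ^ 2) else 0) :=
        lintegral_comp_norm _ hm
    _ = ∫⁻ r in Ioi (0 : ℝ), ENNReal.ofReal (2 * π) * (ENNReal.ofReal r *
            (if s ≤ r ∧ r < 1 then ENNReal.ofReal ((1 / (2 * π * r)) ^ 2) else 0)) := by
        rw [lintegral_const_mul]
        exact (by fun_prop : Measurable fun r : ℝ => ENNReal.ofReal r).mul hm
    _ = ∫⁻ r in Ioi (0 : ℝ), (Ico s 1).indicator
          (fun r => ENNReal.ofReal (1 / (2 * π) * (1 / r))) r := by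
        refine setLIntegral_congr_fun measurableSet_Ioi fun r hr => ?_
        have hr0 : 0 < r := hr
        by_cases h : s ≤ r ∧ r < 1
        · simp only [if_pos h]
          rw [indicator_of_mem (show r ∈ Ico s 1 from h), ← ENNReal.ofReal_mul hr0.le,
            ← ENNReal.ofReal_mul (by positivity)]
          congr 1
          field_simp
        · simp only [if_neg h]
          rw [indicator_of_notMem (show r ∉ Ico s 1 from h)]
          simp
    _ = ∫⁻ r in Ico s 1, ENNReal.ofReal (1 / (2 * π) * (1 / r)) := by
        rw [lintegral_indicator measurableSet_Ico, Measure.restrict_restrict measurableSet_Ico,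
          inter_eq_self_of_subset_left]
        intro r hr
        exact hs.trans_le hr.1
    _ = ENNReal.ofReal (∫ r in s..1, 1 / (2 * π) * (1 / r)) := by
        rw [intervalIntegral.integral_of_le hs1.le, ← integral_Icc_eq_integral_Ioc,
          integral_Icc_eq_integral_Ico, ofReal_integral_eq_lintegral_ofReal]
        · refine (ContinuousOn.integrableOn_Icc ?_).mono_set Ico_subset_Icc_self
          refine continuousOn_const.mul (ContinuousOn.div (by fun_prop) (by fun_prop) ?_)
          intro x hx
          have := hx.1
          linarith
        · refine (ae_restrict_iff' measurableSet_Ico).mpr (ae_of_all _ fun r hr => ?_)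
          have := hs.trans_le hr.1
          simp only [Pi.zero_apply]
          positivity
    _ = ENNReal.ofReal (-log s / (2 * π)) := by
        congr 1
        rw [intervalIntegral.integral_const_mul, integral_one_div]
        · simp [Real.log_inv]
          ring
        · rw [uIcc_of_le hs1.le]
          intro h
          have := h.1
          linarith

lemma continuous_gradient {u : ℂ → ℝ} (hu : ContDiff ℝ 1 u) : Continuous (gradient u) := by
  unfold gradient
  exact (LinearIsometryEquiv.continuous _).comp (hu.continuous_fderiv one_ne_zero)

/-- The Green potential of `|∇u|` with kernel truncated at pseudo-hyperbolic distance `s`. -/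
def greenPotential (u : ℂ → ℝ) (s : ℝ) (x : ℂ) : ℝ≥0∞ :=
  ∫⁻ z, ENNReal.ofReal (‖gradient u z‖ * (1 - ‖z‖ ^ 2)) * greenKernel s ‖eta x z‖ ∂hypMeasure

lemma lintegral_gradient_comp_eta {u : ℂ → ℝ} (hu : ContDiff ℝ 1 u) (s : ℝ) {x : ℂ}
    (hx : x ∈ unitDisk) :
    ∫⁻ y in unitDisk, (if ‖y‖ < s then
        ENNReal.ofReal (‖gradient (fun y => u (eta (-x) y)) y‖ * (1 / (2 * π * ‖y‖))) else 0)
      = greenPotential u s x := by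
  have hx' := neg_mem_unitDisk hx
  rw [greenPotential, ← lintegral_hypMeasure_comp_eta hx', lintegral_hypMeasure]
  refine setLIntegral_congr_fun measurableSet_unitDisk fun y hy => ?_
  have h1 := one_sub_normSq_pos hy
  simp only [eta_eta_neg hx hy, greenKernel]
  split_ifs with h
  · rw [← norm_etaDeriv hx' hy, gradient_comp_eta hu hx' hy, ← ENNReal.ofReal_mul (by positivity),
      ← ENNReal.ofReal_mul (by positivity)]
    congr 1
    field_simp
  · simp

lemma measurable_eta : Measurable fun p : ℂ × ℂ => eta p.1 p.2 := by
  unfold eta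
  have h : Measurable fun p : ℂ × ℂ => (starRingEnd ℂ) p.1 :=
    Complex.continuous_conj.measurable.comp measurable_fst
  exact (measurable_snd.sub measurable_fst).div (measurable_const.sub (h.mul measurable_snd))

lemma measurable_greenPotential {u : ℂ → ℝ} (hu : ContDiff ℝ 1 u) (s : ℝ) :
    Measurable (greenPotential u s) := by
  have hg := (continuous_gradient hu).measurable
  refine Measurable.lintegral_prod_right' (f := fun p : ℂ × ℂ =>
    ENNReal.ofReal (‖gradient u p.2‖ * (1 - ‖p.2‖ ^ 2)) * greenKernel s ‖eta p.1 p.2‖) ?_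
  exact Measurable.mul (by fun_prop) ((measurable_greenKernel s).comp measurable_eta.norm)

lemma lintegral_mul_sq_le {α : Type*} [MeasurableSpace α] (μ : Measure α) {f g : α → ℝ≥0∞}
    (hf : Measurable f) (hg : Measurable g) :
    (∫⁻ a, f a * g a ∂μ) ^ 2 ≤ (∫⁻ a, f a ^ 2 * g a ∂μ) * ∫⁻ a, g a ∂μ := by
  have h := ENNReal.lintegral_mul_le_Lp_mul_Lq (μ.withDensity g) (f := f) (g := fun _ => 1)
    Real.HolderConjugate.two_two hf.aemeasurable aemeasurable_const
  simp only [lintegral_withDensity_eq_lintegral_mul _ hg (hf.pow_const (2 : ℝ)),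
    lintegral_withDensity_eq_lintegral_mul _ hg (hf.mul measurable_const),
    lintegral_withDensity_eq_lintegral_mul _ hg measurable_const] at h
  have h2 := ENNReal.pow_le_pow_left h (n := 2)
  rw [mul_pow, ← ENNReal.rpow_natCast, ← ENNReal.rpow_natCast, ← ENNReal.rpow_natCast,
    ← ENNReal.rpow_mul, ← ENNReal.rpow_mul] at h2
  rw [← ENNReal.rpow_natCast]
  convert h2 using 2
  · simp [mul_comm]
  · simp [mul_comm]
  · simp

/-- The Schur test on `L²`. -/
lemma lintegral_sq_lintegral_kernel_le {α : Type*} [MeasurableSpace α] (μ : Measure α) [SFinite μ]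
    {e : α → ℝ≥0∞} (he : Measurable e) {K : α → α → ℝ≥0∞}
    (hK : Measurable fun p : α × α => K p.1 p.2) {L : ℝ≥0∞}
    (h₁ : ∀ᵐ x ∂μ, ∫⁻ z, K x z ∂μ ≤ L) (h₂ : ∀ᵐ z ∂μ, ∫⁻ x, K x z ∂μ ≤ L) :
    ∫⁻ x, (∫⁻ z, e z * K x z ∂μ) ^ 2 ∂μ ≤ L ^ 2 * ∫⁻ z, e z ^ 2 ∂μ := by
  have heK : Measurable fun p : α × α => e p.2 ^ 2 * K p.1 p.2 :=
    ((he.comp measurable_snd).pow_const 2).mul hK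
  have hswap : ∫⁻ x, ∫⁻ z, e z ^ 2 * K x z ∂μ ∂μ = ∫⁻ z, ∫⁻ x, e z ^ 2 * K x z ∂μ ∂μ :=
    lintegral_lintegral_swap heK.aemeasurable
  have hm : Measurable fun x => ∫⁻ z, e z ^ 2 * K x z ∂μ := heK.lintegral_prod_right'
  have hKx : ∀ x, Measurable (K x) := fun x => hK.comp measurable_prodMk_left
  have hKz : ∀ z, Measurable fun x => K x z := fun z => hK.comp measurable_prodMk_right
  calc ∫⁻ x, (∫⁻ z, e z * K x z ∂μ) ^ 2 ∂μ
      ≤ ∫⁻ x, (∫⁻ z, e z ^ 2 * K x z ∂μ) * L ∂μ := by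
        refine lintegral_mono_ae ?_
        filter_upwards [h₁] with x hx
        exact (lintegral_mul_sq_le μ he (hKx x)).trans (mul_le_mul_right hx _)
    _ = (∫⁻ z, ∫⁻ x, e z ^ 2 * K x z ∂μ ∂μ) * L := by
        rw [lintegral_mul_const _ hm, hswap]
    _ ≤ (∫⁻ z, e z ^ 2 * L ∂μ) * L := by
        refine mul_le_mul_left (lintegral_mono_ae ?_) _
        filter_upwards [h₂] with z hz
        rw [lintegral_const_mul _ (hKz z)]
        exact mul_le_mul_right hz _
    _ = L ^ 2 * ∫⁻ z, e z ^ 2 ∂μ := by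
        rw [lintegral_mul_const _ (he.pow_const 2)]
        ring

lemma lintegral_sq_lintegral_greenKernel_le {e : ℂ → ℝ≥0∞} (he : Measurable e) {s : ℝ}
    (hs : 0 < s) (hs1 : s < 1) :
    ∫⁻ x, (∫⁻ z, e z * greenKernel s ‖eta x z‖ ∂hypMeasure) ^ 2 ∂hypMeasure ≤
      ENNReal.ofReal (-log (1 - s)) ^ 2 * ∫⁻ z, e z ^ 2 ∂hypMeasure := by
  have hK : ∀ x ∈ unitDisk, ∫⁻ z, greenKernel s ‖eta x z‖ ∂hypMeasure ≤
      ENNReal.ofReal (-log (1 - s)) := fun x hx => by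
    rw [lintegral_hypMeasure_comp_eta hx (fun z => greenKernel s ‖z‖)]
    exact lintegral_greenKernel hs hs1
  refine lintegral_sq_lintegral_kernel_le hypMeasure he (K := fun x z => greenKernel s ‖eta x z‖)
    ((measurable_greenKernel s).comp measurable_eta.norm) ?_ ?_
  · filter_upwards [ae_mem_unitDisk] with x hx using hK x hx
  · filter_upwards [ae_mem_unitDisk] with z hz
    refine le_trans (le_of_eq (lintegral_congr fun x => ?_)) (hK z hz)
    rw [norm_eta_comm]

lemma lintegral_greenPotential_sq_le {u : ℂ → ℝ} (hu : ContDiff ℝ 1 u) {s : ℝ} (hs : 0 < s)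
    (hs1 : s < 1) :
    ∫⁻ x, greenPotential u s x ^ 2 ∂hypMeasure ≤
      ENNReal.ofReal (-log (1 - s)) ^ 2 *
        ∫⁻ z in unitDisk, ENNReal.ofReal (‖gradient u z‖ ^ 2) := by
  have hg := (continuous_gradient hu).measurable
  refine (lintegral_sq_lintegral_greenKernel_le (by fun_prop) hs hs1).trans_eq ?_
  congr 1
  rw [lintegral_hypMeasure]
  refine setLIntegral_congr_fun measurableSet_unitDisk fun z hz => ?_
  have h := one_sub_normSq_pos hz
  rw [← ENNReal.ofReal_pow (by positivity), ← ENNReal.ofReal_mul (by positivity)]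
  congr 1
  field_simp

lemma hypMeasure_lt_abs_le {u : ℂ → ℝ} (hu : ContDiff ℝ 1 u)
    (hE : ∫⁻ z in unitDisk, ENNReal.ofReal (‖gradient u z‖ ^ 2) ≤ 1) {s τ t : ℝ} (hs : 0 < s)
    (hs1 : s < 1) (hτ : 0 ≤ τ) (ht : τ < t)
    (h : ∀ x ∈ unitDisk, ENNReal.ofReal |u x| ≤ ENNReal.ofReal τ + greenPotential u s x) :
    hypMeasure {x | t < |u x|} ≤ ENNReal.ofReal ((-log (1 - s) / (t - τ)) ^ 2) := by
  have hd : 0 < t - τ := sub_pos.mpr ht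
  have hL : 0 ≤ -log (1 - s) := by
    have := Real.log_nonpos (by linarith : 0 ≤ 1 - s) (by linarith)
    linarith
  have h1 : {x | t < |u x|} ≤ᵐ[hypMeasure]
      {x | ENNReal.ofReal ((t - τ) ^ 2) ≤ greenPotential u s x ^ 2} := by
    filter_upwards [ae_mem_unitDisk] with x hx hxt
    change ENNReal.ofReal ((t - τ) ^ 2) ≤ greenPotential u s x ^ 2
    rw [ENNReal.ofReal_pow hd.le]
    refine pow_le_pow_left' ?_ 2
    rw [ENNReal.ofReal_sub _ hτ, tsub_le_iff_left]
    exact (ENNReal.ofReal_le_ofReal (le_of_lt hxt)).trans (h x hx)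
  refine (measure_mono_ae h1).trans ?_
  refine (meas_ge_le_lintegral_div ((measurable_greenPotential hu s).pow_const 2).aemeasurable
    ?_ ENNReal.ofReal_ne_top).trans ?_
  · rw [Ne, ENNReal.ofReal_eq_zero, not_le]
    positivity
  · rw [div_pow, ENNReal.ofReal_div_of_pos (by positivity)]
    refine ENNReal.div_le_div_right ?_ _
    refine (lintegral_greenPotential_sq_le hu hs hs1).trans ?_
    rw [ENNReal.ofReal_pow hL]
    exact mul_le_of_le_one_right' hE

/-- The integrand of the representation `w 0 = -∫ radialDensity w`. -/
def radialDensity (w : ℂ → ℝ) (y : ℂ) : ℝ := ⟪gradient w y, y⟫ / (2 * π * ‖y‖ ^ 2)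

lemma abs_radialDensity_le (w : ℂ → ℝ) (y : ℂ) :
    |radialDensity w y| ≤ ‖gradient w y‖ * (1 / (2 * π * ‖y‖)) := by
  rw [radialDensity, abs_div, abs_of_nonneg (by positivity : 0 ≤ 2 * π * ‖y‖ ^ 2)]
  rcases eq_or_ne y 0 with rfl | hy
  · simp
  have hy' : 0 < ‖y‖ := norm_pos_iff.mpr hy
  rw [div_le_iff₀ (by positivity)]
  have : ‖gradient w y‖ * (1 / (2 * π * ‖y‖)) * (2 * π * ‖y‖ ^ 2) = ‖gradient w y‖ * ‖y‖ := by
    field_simp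
  rw [this]
  exact abs_real_inner_le_norm _ _

lemma measurable_radialDensity {w : ℂ → ℝ} (hw : ContDiff ℝ 1 w) :
    Measurable (radialDensity w) := by
  have h : Continuous fun y => ⟪gradient w y, y⟫ := (continuous_gradient hw).inner continuous_id
  exact h.measurable.div (by fun_prop)

lemma gradient_eq_zero_of_notMem {w : ℂ → ℝ} (hs : tsupport w ⊆ unitDisk) {y : ℂ}
    (hy : y ∉ unitDisk) : gradient w y = 0 := by
  have h : w =ᶠ[𝓝 y] fun _ => 0 := notMem_tsupport_iff_eventuallyEq.mp fun h => hy (hs h)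
  rw [h.gradient_eq, gradient_fun_const]

lemma exists_norm_gradient_le {w : ℂ → ℝ} (hw : ContDiff ℝ 1 w) (hs : tsupport w ⊆ unitDisk) :
    ∃ M, 0 ≤ M ∧ ∀ y, ‖gradient w y‖ ≤ M := by
  obtain ⟨M, hM⟩ := (isCompact_closedBall (0 : ℂ) 1).exists_bound_of_continuousOn
    (continuous_gradient hw).continuousOn
  refine ⟨max M 0, le_max_right _ _, fun y => ?_⟩
  by_cases hy : y ∈ unitDisk
  · have h : ‖y‖ < 1 := hy
    exact (hM y (by simpa using h.le)).trans (le_max_left _ _)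
  · rw [gradient_eq_zero_of_notMem hs hy, norm_zero]
    exact le_max_right _ _

lemma integrableOn_radialDensity {w : ℂ → ℝ} (hw : ContDiff ℝ 1 w) (hs : tsupport w ⊆ unitDisk) :
    IntegrableOn (radialDensity w) unitDisk := by
  obtain ⟨M, hM0, hM⟩ := exists_norm_gradient_le hw hs
  refine ⟨(measurable_radialDensity hw).aestronglyMeasurable, ?_⟩
  have hm : Measurable fun r : ℝ => (Iio (1 : ℝ)).indicator
      (fun r => ENNReal.ofReal (M * (1 / (2 * π * r)))) r :=
    Measurable.indicator (by fun_prop) measurableSet_Iio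
  rw [hasFiniteIntegral_iff_enorm]
  calc ∫⁻ y in unitDisk, ‖radialDensity w y‖ₑ
      ≤ ∫⁻ y : ℂ,
          (Iio (1 : ℝ)).indicator (fun r => ENNReal.ofReal (M * (1 / (2 * π * r)))) ‖y‖ := by
        rw [← lintegral_indicator measurableSet_unitDisk]
        refine lintegral_mono fun y => ?_
        by_cases hy : y ∈ unitDisk
        · rw [indicator_of_mem hy, indicator_of_mem (show ‖y‖ ∈ Iio 1 from hy),
            Real.enorm_eq_ofReal_abs]
          refine ENNReal.ofReal_le_ofReal ((abs_radialDensity_le w y).trans ?_)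
          exact mul_le_mul_of_nonneg_right (hM y) (by positivity)
        · rw [indicator_of_notMem hy]
          exact zero_le
    _ = ENNReal.ofReal (2 * π) * ∫⁻ r in Ioi (0 : ℝ), ENNReal.ofReal r *
          (Iio (1 : ℝ)).indicator (fun r => ENNReal.ofReal (M * (1 / (2 * π * r)))) r :=
        lintegral_comp_norm _ hm
    _ ≤ ENNReal.ofReal (2 * π) * ∫⁻ r in Ioi (0 : ℝ),
          (Iio (1 : ℝ)).indicator (fun _ => ENNReal.ofReal (M / (2 * π))) r := by
        gcongr ENNReal.ofReal (2 * π) * ?_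
        refine setLIntegral_mono' measurableSet_Ioi fun r hr => ?_
        have hr0 : 0 < r := hr
        by_cases h : r ∈ Iio (1 : ℝ)
        · rw [indicator_of_mem h, indicator_of_mem h, ← ENNReal.ofReal_mul hr0.le]
          refine ENNReal.ofReal_le_ofReal (le_of_eq ?_)
          field_simp
        · rw [indicator_of_notMem h, mul_zero]
          exact zero_le
    _ < ∞ := by
        rw [lintegral_indicator measurableSet_Iio, Measure.restrict_restrict measurableSet_Iio,
          inter_comm, Ioi_inter_Iio, setLIntegral_const, Real.volume_Ioo]
        exact ENNReal.mul_lt_top ENNReal.ofReal_lt_top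
          (ENNReal.mul_lt_top ENNReal.ofReal_lt_top ENNReal.ofReal_lt_top)

lemma integral_radialDensity {w : ℂ → ℝ} (hw : ContDiff ℝ 1 w) (hs : tsupport w ⊆ unitDisk) :
    ∫ y in unitDisk, radialDensity w y = -w 0 := by
  set E : ℝ → ℂ := fun θ => (Real.cos θ : ℂ) + (Real.sin θ : ℂ) * Complex.I with hE
  have hE1 : ∀ θ, ‖E θ‖ = 1 := fun θ => by
    simpa only [Complex.polarCoord_symm_apply, Complex.ofReal_one, one_mul, abs_one] using
      Complex.norm_polarCoord_symm (1, θ)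
  have hEc : Continuous E := by fun_prop
  set G : ℝ × ℝ → ℝ := fun p => ⟪gradient w (p.1 * E p.2), E p.2⟫ / (2 * π) with hG
  have hGc : Continuous G := by
    have h1 : Continuous fun p : ℝ × ℝ => gradient w (p.1 * E p.2) :=
      (continuous_gradient hw).comp (by fun_prop)
    exact (h1.inner (hEc.comp continuous_snd)).div_const _
  have hG0 : ∀ p : ℝ × ℝ, 1 ≤ p.1 → G p = 0 := fun p hp => by
    simp only [hG]
    rw [gradient_eq_zero_of_notMem hs, inner_zero_left, zero_div]
    change ¬ ‖(p.1 : ℂ) * E p.2‖ < 1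
    rw [norm_mul, hE1, mul_one, Complex.norm_real, Real.norm_of_nonneg (by linarith)]
    exact not_lt.mpr hp
  calc ∫ y in unitDisk, radialDensity w y
      = ∫ y, radialDensity w y := by
        refine setIntegral_eq_integral_of_forall_compl_eq_zero fun y hy => ?_
        rw [radialDensity, gradient_eq_zero_of_notMem hs hy, inner_zero_left, zero_div]
    _ = ∫ p in Ioi (0 : ℝ) ×ˢ Ioo (-π) π, G p := by
        rw [← Complex.integral_comp_polarCoord_symm, polarCoord_target]
        refine setIntegral_congr_fun (measurableSet_Ioi.prod measurableSet_Ioo) fun p hp => ?_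
        have hp0 : 0 < p.1 := hp.1
        have h1 : Complex.polarCoord.symm p = p.1 • E p.2 := by
          rw [Complex.polarCoord_symm_apply, Complex.real_smul]
        have h2 : ⟪gradient w (p.1 • E p.2), p.1 • E p.2⟫ =
            p.1 * ⟪gradient w (p.1 • E p.2), E p.2⟫ := real_inner_smul_right _ _ _
        have h3 : ‖p.1 • E p.2‖ = p.1 := by
          rw [norm_smul, hE1, mul_one, Real.norm_of_nonneg hp0.le]
        simp only [hG, radialDensity, h1, smul_eq_mul, h2, h3, ← Complex.real_smul]
        field_simp
    _ = ∫ p in Ioc (0 : ℝ) 1 ×ˢ Ioo (-π) π, G p := by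
        refine setIntegral_eq_of_subset_of_forall_sdiff_eq_zero
          (measurableSet_Ioi.prod measurableSet_Ioo)
          (prod_mono Ioc_subset_Ioi_self Subset.rfl) fun p hp => hG0 p ?_
        by_contra h
        exact hp.2 ⟨⟨hp.1.1, (not_le.mp h).le⟩, hp.1.2⟩
    _ = ∫ θ in Ioo (-π) π, ∫ r in Ioc (0 : ℝ) 1, G (r, θ) := by
        rw [Measure.volume_eq_prod, ← Measure.prod_restrict, integral_prod_symm]
        rw [Measure.prod_restrict]
        exact (hGc.continuousOn.integrableOn_compact (isCompact_Icc.prod isCompact_Icc)).mono_set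
          (prod_mono Ioc_subset_Icc_self Ioo_subset_Icc_self)
    _ = ∫ θ in Ioo (-π) π, -w 0 / (2 * π) := by
        refine integral_congr_ae (ae_of_all _ fun θ => ?_)
        have hd : ∀ r : ℝ, HasDerivAt (fun r : ℝ => w (r * E θ) / (2 * π)) (G (r, θ)) r := by
          intro r
          have h1 : HasDerivAt (fun r : ℝ => (r : ℂ) * E θ) (E θ) r := by
            simpa using (Complex.ofRealCLM.hasDerivAt (x := r)).mul_const (E θ)
          have h2 : HasFDerivAt w (fderiv ℝ w (r * E θ)) (r * E θ) :=
            ((hw.differentiable one_ne_zero) _).hasFDerivAt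
          have h3 := (h2.comp_hasDerivAt r h1).div_const (2 * π)
          simp only [hG]
          rw [inner_gradient_left]
          exact h3
        have hc : Continuous fun r : ℝ => G (r, θ) := by fun_prop
        simp only
        rw [← intervalIntegral.integral_of_le zero_le_one,
          intervalIntegral.integral_eq_sub_of_hasDerivAt (fun r _ => hd r)
            (hc.intervalIntegrable _ _)]
        have : w (E θ) = 0 := by
          refine image_eq_zero_of_notMem_tsupport fun h => ?_
          have : ‖E θ‖ < 1 := hs h
          rw [hE1] at this
          exact lt_irrefl _ this
        simp [this, neg_div]
    _ = -w 0 := by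
        rw [setIntegral_const, measureReal_def, Real.volume_Ioo,
          ENNReal.toReal_ofReal (by linarith [pi_pos]), smul_eq_mul]
        field_simp
        ring

lemma ofReal_abs_zero_le {w : ℂ → ℝ} (hw : ContDiff ℝ 1 w) (hs : tsupport w ⊆ unitDisk)
    (hE : ∫⁻ z in unitDisk, ENNReal.ofReal (‖gradient w z‖ ^ 2) ≤ 1) {c : ℂ → ℝ}
    (hc : Measurable c) (hc01 : ∀ y, c y ∈ Icc (0 : ℝ) 1) {s R : ℝ} (hR : 0 < R) (hR1 : R < 1)
    (hc1 : ∀ y, s ≤ ‖y‖ → ‖y‖ < R → c y = 1) :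
    ENNReal.ofReal |w 0| ≤ ENNReal.ofReal |∫ y in unitDisk, c y * radialDensity w y| +
      (∫⁻ y in unitDisk, if ‖y‖ < s then
        ENNReal.ofReal (‖gradient w y‖ * (1 / (2 * π * ‖y‖))) else 0) +
      ENNReal.ofReal (√(-log R / (2 * π))) := by
  have hN := integrableOn_radialDensity hw hs
  have hg := (continuous_gradient hw).measurable
  have hcN : IntegrableOn (fun y => c y * radialDensity w y) unitDisk := by
    refine Integrable.bdd_mul hN hc.aestronglyMeasurable (c := 1) (ae_of_all _ fun y => ?_)
    rw [Real.norm_of_nonneg (hc01 y).1]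
    exact (hc01 y).2
  have h0 : (∫ y in unitDisk, c y * radialDensity w y) +
      ∫ y in unitDisk, (1 - c y) * radialDensity w y = -w 0 := by
    rw [← integral_radialDensity hw hs, ← integral_add hcN]
    · refine integral_congr_ae (ae_of_all _ fun y => ?_)
      simp only
      ring
    · simp only [sub_mul, one_mul]
      exact hN.sub hcN
  have hLR : 0 ≤ -log R / (2 * π) :=
    div_nonneg (by linarith [Real.log_nonpos hR.le hR1.le]) (by positivity)
  set g : ℂ → ℝ≥0∞ := fun y =>
    if R ≤ ‖y‖ ∧ ‖y‖ < 1 then ENNReal.ofReal (1 / (2 * π * ‖y‖)) else 0 with hgdef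
  have hgm : Measurable g := by
    refine Measurable.ite ?_ (by fun_prop) measurable_const
    exact measurable_norm measurableSet_Ico
  have hmA : Measurable fun y : ℂ => if ‖y‖ < s then
      ENNReal.ofReal (‖gradient w y‖ * (1 / (2 * π * ‖y‖))) else 0 := by
    refine Measurable.ite ?_ (by fun_prop) measurable_const
    exact measurable_norm measurableSet_Iio
  have h2 : ∫⁻ y in unitDisk, ENNReal.ofReal ‖gradient w y‖ * g y ≤
      ENNReal.ofReal (√(-log R / (2 * π))) := by
    have h := ENNReal.lintegral_mul_le_Lp_mul_Lq (volume.restrict unitDisk)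
      Real.HolderConjugate.two_two (f := fun y => ENNReal.ofReal ‖gradient w y‖) (g := g)
      (by fun_prop) hgm.aemeasurable
    refine h.trans ?_
    have e1 : ∫⁻ y in unitDisk, ENNReal.ofReal ‖gradient w y‖ ^ (2 : ℝ) ≤ 1 := by
      refine le_of_eq_of_le ?_ hE
      refine lintegral_congr fun y => ?_
      rw [ENNReal.rpow_two, ENNReal.ofReal_pow (norm_nonneg _)]
    have e2 : ∫⁻ y in unitDisk, g y ^ (2 : ℝ) ≤ ENNReal.ofReal (-log R / (2 * π)) := by
      rw [← lintegral_annulus hR hR1]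
      refine (setLIntegral_le_lintegral _ _).trans (lintegral_mono fun y => ?_)
      simp only [hgdef, ENNReal.rpow_two]
      split_ifs
      · rw [ENNReal.ofReal_pow (by positivity)]
      · simp
    calc _ ≤ (1 : ℝ≥0∞) ^ (1 / (2 : ℝ)) * ENNReal.ofReal (-log R / (2 * π)) ^ (1 / (2 : ℝ)) := by
          gcongr
      _ = _ := by
          rw [ENNReal.one_rpow, one_mul, Real.sqrt_eq_rpow,
            ENNReal.ofReal_rpow_of_nonneg hLR (by norm_num)]
  have h3 : ENNReal.ofReal |∫ y in unitDisk, (1 - c y) * radialDensity w y| ≤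
      (∫⁻ y in unitDisk, if ‖y‖ < s then
        ENNReal.ofReal (‖gradient w y‖ * (1 / (2 * π * ‖y‖))) else 0) +
      ENNReal.ofReal (√(-log R / (2 * π))) := by
    rw [← Real.enorm_eq_ofReal_abs]
    refine (enorm_integral_le_lintegral_enorm _).trans ?_
    refine le_trans ?_ (add_le_add_right h2 _)
    rw [← lintegral_add_left hmA]
    refine setLIntegral_mono' measurableSet_unitDisk fun y hy => ?_
    have hb : ‖(1 - c y) * radialDensity w y‖ₑ ≤
        ENNReal.ofReal (‖gradient w y‖ * (1 / (2 * π * ‖y‖))) := by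
      rw [Real.enorm_eq_ofReal_abs, abs_mul, abs_of_nonneg (by linarith [(hc01 y).2])]
      refine ENNReal.ofReal_le_ofReal (le_trans ?_ (abs_radialDensity_le w y))
      exact mul_le_of_le_one_left (abs_nonneg _) (by linarith [(hc01 y).1])
    by_cases h : ‖y‖ < s
    · rw [if_pos h]
      exact hb.trans le_self_add
    · rw [if_neg h, zero_add]
      by_cases h' : ‖y‖ < R
      · rw [hc1 y (not_lt.mp h) h']
        simp
      · simp only [hgdef]
        rw [if_pos ⟨not_lt.mp h', hy⟩, ← ENNReal.ofReal_mul (norm_nonneg _)]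
        exact hb
  rw [add_assoc]
  refine le_trans ?_ (add_le_add_right h3 _)
  rw [← ENNReal.ofReal_add (abs_nonneg _) (abs_nonneg _)]
  refine ENNReal.ofReal_le_ofReal ?_
  rw [← abs_neg (w 0), ← h0]
  exact abs_add_le _ _

lemma exists_radial_test_function {s R : ℝ} (hs : 0 < s) (hsR : s < R) (hR1 : R < 1) :
    ∃ c φ : ℂ → ℝ, Measurable c ∧ (∀ y, c y ∈ Icc (0 : ℝ) 1) ∧
      (∀ y, s ≤ ‖y‖ → ‖y‖ < R → c y = 1) ∧ ContDiff ℝ (⊤ : ℕ∞) φ ∧ HasCompactSupport φ ∧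
      tsupport φ ⊆ unitDisk ∧
      ∀ w y, ⟪gradient w y, gradient φ y⟫ = -(c y * radialDensity w y) := by
  have hs2 : s ^ 2 < 1 := by nlinarith
  have hR2 : R ^ 2 < 1 := by nlinarith
  set δ : ℝ := min (s ^ 2) (1 - R ^ 2) / 8 with hδ
  have hδ0 : 0 < δ := div_pos (lt_min (by positivity) (by linarith)) (by norm_num)
  have hδs : 8 * δ ≤ s ^ 2 := by
    rw [hδ, mul_div_cancel₀ _ (by norm_num)]; exact min_le_left _ _
  have hδR : 8 * δ ≤ 1 - R ^ 2 := by
    rw [hδ, mul_div_cancel₀ _ (by norm_num)]; exact min_le_right _ _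
  let χ : ContDiffBump (1 / 2 : ℝ) := ⟨1 / 2 - 2 * δ, 1 / 2 - δ, by linarith, by linarith⟩
  have hχ0 : ∀ q, q ≤ δ ∨ 1 - δ ≤ q → χ q = 0 := fun q hq => by
    refine χ.zero_of_le_dist ?_
    change 1 / 2 - δ ≤ |q - 1 / 2|
    rcases hq with hq | hq
    · exact le_trans (by linarith) (neg_le_abs _)
    · exact le_trans (by linarith) (le_abs_self _)
  have hχ1 : ∀ q, s ^ 2 ≤ q → q ≤ R ^ 2 → χ q = 1 := fun q h1 h2 => by
    refine χ.one_of_mem_closedBall ?_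
    change |q - 1 / 2| ≤ 1 / 2 - 2 * δ
    exact abs_le.mpr ⟨by linarith, by linarith⟩
  set h : ℝ → ℝ := fun q => χ q / (4 * π * q) with hh
  have hhd : ContDiff ℝ (⊤ : ℕ∞) h := contDiff_iff_contDiffAt.mpr fun q => by
    by_cases hq : δ ≤ q
    · exact χ.contDiffAt.div (by fun_prop) (by
        have := hδ0.trans_le hq
        positivity)
    · refine (contDiffAt_const (c := (0 : ℝ))).congr_of_eventuallyEq ?_
      filter_upwards [Iio_mem_nhds (not_le.mp hq)] with r hr
      simp [hh, hχ0 r (Or.inl (le_of_lt hr))]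
  set H : ℝ → ℝ := fun q => -∫ r in (1 : ℝ)..q, h r with hH
  have hHd : ∀ q, HasDerivAt H (-h q) q := fun q =>
    (intervalIntegral.integral_hasDerivAt_right (hhd.continuous.intervalIntegrable _ _)
      (hhd.continuous.stronglyMeasurableAtFilter _ _) hhd.continuous.continuousAt).neg
  have hHc : ContDiff ℝ (⊤ : ℕ∞) H := by
    rw [contDiff_infty_iff_deriv]
    refine ⟨fun q => (hHd q).differentiableAt, ?_⟩
    rw [show deriv H = fun q => -h q from funext fun q => (hHd q).deriv]
    exact hhd.neg
  have hH0 : ∀ q, 1 - δ ≤ q → H q = 0 := fun q hq => by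
    have : ∫ r in (1 : ℝ)..q, h r = ∫ r in (1 : ℝ)..q, (0 : ℝ) := by
      refine intervalIntegral.integral_congr fun r hr => ?_
      have hr' : 1 - δ ≤ r := (le_min (by linarith) hq).trans hr.1
      simp [hh, hχ0 r (Or.inr hr')]
    simp only [hH, this]
    simp
  have hts : tsupport (fun y : ℂ => H (‖y‖ ^ 2)) ⊆ {y : ℂ | ‖y‖ ^ 2 ≤ 1 - δ} := by
    refine closure_minimal (fun y hy => ?_) (isClosed_le (by fun_prop) continuous_const)
    by_contra hc
    exact hy (hH0 _ (not_le.mp hc).le)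
  have hsub : {y : ℂ | ‖y‖ ^ 2 ≤ 1 - δ} ⊆ unitDisk := fun y hy => by
    have hy' : ‖y‖ ^ 2 ≤ 1 - δ := hy
    change ‖y‖ < 1
    nlinarith [norm_nonneg y]
  refine ⟨fun y => χ (‖y‖ ^ 2), fun y => H (‖y‖ ^ 2), ?_, fun y => ⟨χ.nonneg, χ.le_one⟩,
    fun y h1 h2 => hχ1 _ (by gcongr) (by gcongr), hHc.comp (contDiff_norm_sq ℝ), ?_,
    hts.trans hsub, fun w y => ?_⟩
  · exact (χ.continuous.comp (by fun_prop)).measurable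
  · refine HasCompactSupport.intro (isCompact_closedBall (0 : ℂ) 1) fun y hy => hH0 _ ?_
    have hy' : 1 < ‖y‖ := by simpa using hy
    nlinarith
  · have hg : HasGradientAt (fun y : ℂ => H (‖y‖ ^ 2)) ((-h (‖y‖ ^ 2) * 2) • y) y := by
      rw [hasGradientAt_iff_hasFDerivAt]
      have h2 := (hHd (‖y‖ ^ 2)).comp_hasFDerivAt y (hasStrictFDerivAt_norm_sq y).hasFDerivAt
      refine h2.congr_fderiv ?_
      ext v
      simp [mul_assoc]
      ring
    rw [hg.gradient, inner_smul_right, radialDensity, hh]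
    have := pi_pos
    rcases eq_or_ne y 0 with rfl | hy
    · simp
    have hy' : 0 < ‖y‖ := norm_pos_iff.mpr hy
    simp only
    field_simp
    norm_num

lemma lintegral_normSq_gradient_comp_eta {u : ℂ → ℝ} (hu : ContDiff ℝ 1 u) {ζ : ℂ}
    (hζ : ζ ∈ unitDisk) :
    ∫⁻ z in unitDisk, ENNReal.ofReal (‖gradient (fun y => u (eta ζ y)) z‖ ^ 2) =
      ∫⁻ z in unitDisk, ENNReal.ofReal (‖gradient u z‖ ^ 2) := by
  rw [← lintegral_comp_eta hζ fun z => ENNReal.ofReal (‖gradient u z‖ ^ 2)]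
  refine setLIntegral_congr_fun measurableSet_unitDisk fun z hz => ?_
  simp only [gradient_comp_eta hu hζ hz]
  rw [mul_pow, ENNReal.ofReal_mul (by positivity)]

lemma ofReal_abs_le_add_greenPotential {u : ℂ → ℝ} (hu : ContDiff ℝ 1 u)
    (hsupp : tsupport u ⊆ unitDisk)
    (hE : ∫⁻ z in unitDisk, ENNReal.ofReal (‖gradient u z‖ ^ 2) ≤ 1) {c : ℂ → ℝ}
    (hc : Measurable c) (hc01 : ∀ y, c y ∈ Icc (0 : ℝ) 1) {s R : ℝ} (hR : 0 < R) (hR1 : R < 1)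
    (hc1 : ∀ y, s ≤ ‖y‖ → ‖y‖ < R → c y = 1) {x : ℂ} (hx : x ∈ unitDisk) :
    ENNReal.ofReal |u x| ≤
      ENNReal.ofReal |∫ y in unitDisk, c y * radialDensity (fun y => u (eta (-x) y)) y| +
        greenPotential u s x + ENNReal.ofReal (√(-log R / (2 * π))) := by
  have hx' := neg_mem_unitDisk hx
  obtain ⟨w, hw, hws, hwu⟩ := exists_contDiff_extension_comp_eta hu hsupp hx'
  have hg : ∀ y ∈ unitDisk, gradient w y = gradient (fun y => u (eta (-x) y)) y := fun y hy =>
    (Filter.eventuallyEq_of_mem (isOpen_unitDisk.mem_nhds hy) hwu).gradient_eq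
  have h0 : w 0 = u x := by
    rw [hwu 0 (by simp [unitDisk]), eta_zero, neg_neg]
  have hEw : ∫⁻ z in unitDisk, ENNReal.ofReal (‖gradient w z‖ ^ 2) ≤ 1 := by
    rw [← lintegral_normSq_gradient_comp_eta hu hx'] at hE
    refine le_of_eq_of_le (setLIntegral_congr_fun measurableSet_unitDisk fun z hz => ?_) hE
    simp only [hg z hz]
  have h := ofReal_abs_zero_le hw hws hEw hc hc01 hR hR1 hc1
  have h1 : ∫ y in unitDisk, c y * radialDensity w y =
      ∫ y in unitDisk, c y * radialDensity (fun y => u (eta (-x) y)) y :=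
    setIntegral_congr_fun measurableSet_unitDisk fun y hy => by
      simp only [radialDensity, hg y hy]
  have h2 : (∫⁻ y in unitDisk, if ‖y‖ < s then
        ENNReal.ofReal (‖gradient w y‖ * (1 / (2 * π * ‖y‖))) else 0) = greenPotential u s x := by
    rw [← lintegral_gradient_comp_eta hu s hx]
    exact setLIntegral_congr_fun measurableSet_unitDisk fun y hy => by simp only [hg y hy]
  rwa [h0, h1, h2] at h

/-- A priori bound for the distribution function. -/
lemma hypMeasure_lt_abs_le_of_exp {u : ℂ → ℝ} (hu : ContDiff ℝ 1 u)
    (hsupp : tsupport u ⊆ unitDisk)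
    (hE : ∫⁻ z in unitDisk, ENNReal.ofReal (‖gradient u z‖ ^ 2) ≤ 1) {κ t : ℝ} (hκ : 0 < κ)
    (hκ1 : κ < 1) (ht : 0 < t) :
    hypMeasure {x | t < |u x|} ≤
      ENNReal.ofReal ((-log (1 - rexp (-(2 * π * κ ^ 2 * t ^ 2))) / ((1 - κ) * t)) ^ 2) := by
  have := pi_pos
  have hs1 : rexp (-(2 * π * κ ^ 2 * t ^ 2)) < 1 := Real.exp_lt_one_iff.mpr (by
    have : 0 < 2 * π * κ ^ 2 * t ^ 2 := by positivity
    linarith)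
  have h := hypMeasure_lt_abs_le hu hE (τ := κ * t) (t := t) (Real.exp_pos _) hs1 (by positivity)
    (by nlinarith) fun x hx => ?_
  · rwa [show t - κ * t = (1 - κ) * t by ring] at h
  · have h := ofReal_abs_le_add_greenPotential hu hsupp hE (c := fun _ => 0)
      (s := rexp (-(2 * π * κ ^ 2 * t ^ 2))) measurable_const (fun _ => by simp)
      (Real.exp_pos _) hs1 (fun y h1 h2 => absurd h1 (not_le.mpr h2)) hx
    have e : -log (rexp (-(2 * π * κ ^ 2 * t ^ 2))) / (2 * π) = (κ * t) ^ 2 := by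
      rw [Real.log_exp]
      field_simp
    rw [e, Real.sqrt_sq (by positivity)] at h
    simpa [add_comm] using h

lemma eventually_forall_abs_le {u : ℕ → ℂ → ℝ}
    (hvanish : ∀ ζ : ℕ → ℂ, (∀ k, ζ k ∈ unitDisk) →
      ∀ φ : ℂ → ℝ, ContDiff ℝ (⊤ : ℕ∞) φ → HasCompactSupport φ → tsupport φ ⊆ unitDisk →
      Tendsto (fun k =>
          ∫ x in unitDisk, ⟪gradient (fun y => u k (eta (ζ k) y)) x, gradient φ x⟫)
        atTop (𝓝 0)) {φ : ℂ → ℝ} (hφ : ContDiff ℝ (⊤ : ℕ∞) φ) (hφc : HasCompactSupport φ)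
    (hφs : tsupport φ ⊆ unitDisk) {ε : ℝ} (hε : 0 < ε) :
    ∀ᶠ k in atTop, ∀ ζ ∈ unitDisk,
      |∫ x in unitDisk, ⟪gradient (fun y => u k (eta ζ y)) x, gradient φ x⟫| ≤ ε := by
  have key : ∀ k, ∃ ζ ∈ unitDisk,
      |∫ x in unitDisk, ⟪gradient (fun y => u k (eta ζ y)) x, gradient φ x⟫| ≤ ε →
      ∀ ζ ∈ unitDisk,
        |∫ x in unitDisk, ⟪gradient (fun y => u k (eta ζ y)) x, gradient φ x⟫| ≤ ε := by
    intro k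
    by_cases h : ∀ ζ ∈ unitDisk,
        |∫ x in unitDisk, ⟪gradient (fun y => u k (eta ζ y)) x, gradient φ x⟫| ≤ ε
    · exact ⟨0, by simp [unitDisk], fun _ => h⟩
    · push Not at h
      obtain ⟨ζ, hζ, hlt⟩ := h
      exact ⟨ζ, hζ, fun h' => absurd h' (not_le.mpr hlt)⟩
  choose ζ hζ hζ' using key
  have h := hvanish ζ hζ φ hφ hφc hφs
  filter_upwards [(Metric.tendsto_nhds.mp h) ε hε] with k hk
  refine hζ' k ?_
  rw [Real.dist_eq, sub_zero] at hk
  exact hk.le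

lemma tendsto_hypMeasure_lt_abs {u : ℕ → ℂ → ℝ} (hreg : ∀ k, ContDiff ℝ 1 (u k))
    (hsupp : ∀ k, tsupport (u k) ⊆ unitDisk)
    (hE : ∀ k, ∫⁻ z in unitDisk, ENNReal.ofReal (‖gradient (u k) z‖ ^ 2) ≤ 1)
    (hvanish : ∀ ζ : ℕ → ℂ, (∀ k, ζ k ∈ unitDisk) →
      ∀ φ : ℂ → ℝ, ContDiff ℝ (⊤ : ℕ∞) φ → HasCompactSupport φ → tsupport φ ⊆ unitDisk →
      Tendsto (fun k =>
          ∫ x in unitDisk, ⟪gradient (fun y => u k (eta (ζ k) y)) x, gradient φ x⟫)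
        atTop (𝓝 0)) {t : ℝ} (ht : 0 < t) :
    Tendsto (fun k => hypMeasure {x | t < |u k x|}) atTop (𝓝 0) := by
  have hlim : Tendsto (fun s : ℝ => ENNReal.ofReal ((-log (1 - s) / (t - t / 2)) ^ 2)) (𝓝[>] 0)
      (𝓝 0) := by
    have h : ContinuousAt (fun s : ℝ => ENNReal.ofReal ((-log (1 - s) / (t - t / 2)) ^ 2)) 0 :=
      ENNReal.continuous_ofReal.continuousAt.comp
        (((ContinuousAt.log (by fun_prop) (by simp)).neg.div_const _).pow 2)
    have h' := h.tendsto
    simp only [sub_zero, log_one, neg_zero, zero_div, ne_eq, OfNat.ofNat_ne_zero,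
      not_false_eq_true, zero_pow, ENNReal.ofReal_zero] at h'
    exact h'.mono_left nhdsWithin_le_nhds
  have hlimR : Tendsto (fun R : ℝ => √(-log R / (2 * π))) (𝓝[<] 1) (𝓝 0) := by
    have h : ContinuousAt (fun R : ℝ => √(-log R / (2 * π))) 1 :=
      Real.continuous_sqrt.continuousAt.comp
        ((ContinuousAt.log (by fun_prop) (by simp)).neg.div_const _)
    have h' := h.tendsto
    simp only [log_one, neg_zero, zero_div, Real.sqrt_zero] at h'
    exact h'.mono_left nhdsWithin_le_nhds
  refine ENNReal.tendsto_nhds_zero.mpr fun ε hε => ?_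
  obtain ⟨s, hsε, hs0, hs1⟩ := ((hlim.eventually_le_const hε).and
    (Ioo_mem_nhdsGT (zero_lt_one' ℝ))).exists
  obtain ⟨R, hRt, hRs, hR1⟩ := ((hlimR.eventually_le_const (show 0 < t / 4 by positivity)).and
    (Ioo_mem_nhdsLT hs1)).exists
  obtain ⟨c, φ, hc, hc01, hc1, hφ, hφc, hφs, hcφ⟩ := exists_radial_test_function hs0 hRs hR1
  filter_upwards [eventually_forall_abs_le hvanish hφ hφc hφs (show 0 < t / 4 by positivity)]
    with k hk
  refine (hypMeasure_lt_abs_le (hreg k) (hE k) hs0 hs1 (τ := t / 2) (by positivity)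
    (by linarith) fun x hx => ?_).trans hsε
  refine (ofReal_abs_le_add_greenPotential (hreg k) (hsupp k) (hE k) hc hc01 (hs0.trans hRs) hR1
    hc1 hx).trans ?_
  have h := hk (-x) (neg_mem_unitDisk hx)
  simp only [hcφ, integral_neg, abs_neg] at h
  rw [show t / 2 = t / 4 + t / 4 by ring, ENNReal.ofReal_add (by positivity) (by positivity),
    add_right_comm]
  gcongr

lemma sq_log_one_sub_exp_le {a q : ℝ} (ha : 0 < a) (hq : 0 < q) (hq1 : q ≤ 1) :
    (-log (1 - rexp (-a))) ^ 2 ≤ (2 / q) ^ 2 * ((1 + a) * a ^ (-q)) * rexp (-a) ^ 2 := by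
  set s := rexp (-a) with hs
  have hs0 : 0 < s := Real.exp_pos _
  have hs1 : s * (1 + a) ≤ 1 := by
    rw [hs, Real.exp_neg, inv_mul_le_iff₀ (Real.exp_pos _), mul_one, add_comm]
    exact Real.add_one_le_exp a
  have hs1' : 0 < 1 - s := by nlinarith
  set y := (1 - s)⁻¹ with hy
  have hy1 : 1 ≤ y := (one_le_inv₀ hs1').mpr (by linarith)
  have hy0 : 0 < y := by linarith
  have hya : y ≤ (1 + a) / a := by
    rw [hy, inv_le_comm₀ hs1' (by positivity), inv_div, div_le_iff₀ (by positivity)]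
    linarith
  have hyq : y ^ (q / 2) ≤ y := by
    simpa using Real.rpow_le_rpow_of_exponent_le hy1 (show q / 2 ≤ 1 by linarith)
  have hlog : -log (1 - s) = log y := by rw [hy, Real.log_inv]
  have hlog0 : 0 ≤ log y := Real.log_nonneg hy1
  have h1 : log y ≤ 2 / q * (y ^ (q / 2) * s) := by
    have h2 : log (y ^ (q / 2)) ≤ y ^ (q / 2) - 1 := Real.log_le_sub_one_of_pos (by positivity)
    rw [Real.log_rpow hy0] at h2
    have h3 : y ^ (q / 2) * (1 - s) ≤ 1 := by
      calc y ^ (q / 2) * (1 - s) ≤ y * (1 - s) := by gcongr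
        _ = 1 := inv_mul_cancel₀ hs1'.ne'
    calc log y = 2 / q * (q / 2 * log y) := by field_simp
      _ ≤ 2 / q * (y ^ (q / 2) * s) := mul_le_mul_of_nonneg_left (by linarith) (by positivity)
  have h4 : (y ^ (q / 2)) ^ 2 ≤ (1 + a) * a ^ (-q) := by
    calc (y ^ (q / 2)) ^ 2 = y ^ q := by
          rw [← Real.rpow_natCast, ← Real.rpow_mul hy0.le]
          norm_num
      _ ≤ ((1 + a) / a) ^ q := by gcongr
      _ = (1 + a) ^ q * a ^ (-q) := by
          rw [Real.div_rpow (by positivity) ha.le, Real.rpow_neg ha.le, div_eq_mul_inv]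
      _ ≤ (1 + a) * a ^ (-q) := by
          gcongr
          simpa using Real.rpow_le_rpow_of_exponent_le (show 1 ≤ 1 + a by linarith) hq1
  rw [hlog]
  calc log y ^ 2 ≤ (2 / q * (y ^ (q / 2) * s)) ^ 2 := by gcongr
    _ = (2 / q) ^ 2 * (y ^ (q / 2)) ^ 2 * s ^ 2 := by ring
    _ ≤ _ := by gcongr

/-- The derivative of `t ↦ C * t ^ r * exp (p * t ^ 2)`. -/
def growthDeriv (C r p t : ℝ) : ℝ :=
  C * (r * t ^ (r - 1) + 2 * p * (t * t ^ r)) * rexp (p * t ^ 2)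

lemma continuous_growthDeriv (C : ℝ) {r : ℝ} (hr : 2 < r) (p : ℝ) :
    Continuous (growthDeriv C r p) := by
  have h1 : Continuous fun t : ℝ => t ^ (r - 1) :=
    Real.continuous_rpow_const (by linarith)
  have h2 : Continuous fun t : ℝ => t ^ r := Real.continuous_rpow_const (by linarith)
  unfold growthDeriv
  fun_prop

lemma growthDeriv_nonneg {C r p t : ℝ} (hC : 0 ≤ C) (hr : 2 < r) (hp : 0 ≤ p) (ht : 0 ≤ t) :
    0 ≤ growthDeriv C r p t := by
  have : 0 ≤ r := by linarith
  unfold growthDeriv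
  positivity

lemma integral_growthDeriv (C : ℝ) {r : ℝ} (hr : 2 < r) (p t : ℝ) :
    ∫ x in (0 : ℝ)..t, growthDeriv C r p x = C * t ^ r * rexp (p * t ^ 2) := by
  have hd : ∀ x, HasDerivAt (fun x : ℝ => C * x ^ r * rexp (p * x ^ 2))
      (growthDeriv C r p x) x := by
    intro x
    have h1 : HasDerivAt (fun x : ℝ => x ^ r) (r * x ^ (r - 1)) x :=
      Real.hasDerivAt_rpow_const (Or.inr (by linarith))
    have h2 : HasDerivAt (fun x : ℝ => rexp (p * x ^ 2)) (rexp (p * x ^ 2) * (p * (2 * x))) x := by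
      have := ((hasDerivAt_pow 2 x).const_mul p).exp
      simpa using this
    refine ((h1.const_mul C).mul h2).congr_deriv ?_
    rw [growthDeriv]
    ring
  rw [intervalIntegral.integral_eq_sub_of_hasDerivAt (fun x _ => hd x)
    ((continuous_growthDeriv C hr p).intervalIntegrable _ _),
    Real.zero_rpow (by linarith)]
  simp

lemma integrableOn_distribution_bound_mul_growthDeriv {C r p κ b : ℝ} (hC : 0 ≤ C)
    (hr : 2 < r) (hp : 0 ≤ p) (hb : 0 < b) (hpb : p < 2 * b) :
    IntegrableOn (fun t => (-log (1 - rexp (-(b * t ^ 2))) / (κ * t)) ^ 2 * growthDeriv C r p t)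
      (Ioi 0) := by
  obtain ⟨q, hq0, hq1, hqr⟩ : ∃ q : ℝ, 0 < q ∧ q ≤ 1 ∧ q ≤ (r - 2) / 4 :=
    ⟨min 1 ((r - 2) / 4), lt_min one_pos (by linarith), min_le_left _ _, min_le_right _ _⟩
  have hI : ∀ α : ℝ, -1 < α →
      IntegrableOn (fun t : ℝ => t ^ α * rexp (-(2 * b - p) * t ^ 2)) (Ioi 0) := fun α hα =>
    integrableOn_rpow_mul_exp_neg_mul_sq (by linarith) hα
  have hJ : ∀ A B D : ℝ, IntegrableOn (fun t : ℝ =>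
      A * (t ^ (r - 3 - 2 * q) * rexp (-(2 * b - p) * t ^ 2)) +
      B * (t ^ (r - 1 - 2 * q) * rexp (-(2 * b - p) * t ^ 2)) +
      D * (t ^ (r + 1 - 2 * q) * rexp (-(2 * b - p) * t ^ 2))) (Ioi 0) := fun A B D =>
    (((hI _ (by linarith)).const_mul A).add ((hI _ (by linarith)).const_mul B)).add
      ((hI _ (by linarith)).const_mul D)
  set M := (2 / q) ^ 2 * b ^ (-q) * C / κ ^ 2 with hM
  refine (hJ (M * r) (M * (2 * p + b * r)) (M * (b * (2 * p)))).mono' ?_ ?_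
  · have := (continuous_growthDeriv C hr p).measurable
    exact Measurable.aestronglyMeasurable (by fun_prop)
  filter_upwards [ae_restrict_mem measurableSet_Ioi] with t ht
  have ht0 : 0 < t := ht
  have hg := growthDeriv_nonneg hC hr hp ht0.le
  rw [Real.norm_of_nonneg (by positivity)]
  have hlog := sq_log_one_sub_exp_le (show 0 < b * t ^ 2 by positivity) hq0 hq1
  calc (-log (1 - rexp (-(b * t ^ 2))) / (κ * t)) ^ 2 * growthDeriv C r p t
      ≤ (2 / q) ^ 2 * ((1 + b * t ^ 2) * (b * t ^ 2) ^ (-q)) * rexp (-(b * t ^ 2)) ^ 2 /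
          (κ * t) ^ 2 * growthDeriv C r p t := by
        rw [div_pow]
        gcongr
    _ = _ := by
        have e1 : t ^ (r - 1 - 2 * q) = t ^ (r - 3 - 2 * q) * t ^ 2 := by
          rw [← Real.rpow_natCast, ← Real.rpow_add ht0]
          congr 1
          push_cast
          ring
        have e2 : t ^ (r + 1 - 2 * q) = t ^ (r - 3 - 2 * q) * t ^ 4 := by
          rw [← Real.rpow_natCast, ← Real.rpow_add ht0]
          congr 1
          push_cast
          ring
        have e3 : t ^ (r - 1) = t ^ (r - 3 - 2 * q) * t ^ 2 * t ^ (2 * q) := by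
          rw [← Real.rpow_natCast, ← Real.rpow_add ht0, ← Real.rpow_add ht0]
          congr 1
          push_cast
          ring
        have e4 : t ^ r = t ^ (r - 3 - 2 * q) * t ^ 3 * t ^ (2 * q) := by
          rw [← Real.rpow_natCast, ← Real.rpow_add ht0, ← Real.rpow_add ht0]
          congr 1
          push_cast
          ring
        have e5 : (b * t ^ 2) ^ (-q) = b ^ (-q) * (t ^ (2 * q))⁻¹ := by
          rw [Real.mul_rpow hb.le (by positivity), Real.rpow_neg (by positivity) q,
            Real.rpow_neg (by positivity) q, ← Real.rpow_natCast, ← Real.rpow_mul ht0.le]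
          norm_num
        have e6 : rexp (-(2 * b - p) * t ^ 2) = rexp (-(b * t ^ 2)) ^ 2 * rexp (p * t ^ 2) := by
          rw [← Real.exp_nat_mul, ← Real.exp_add]
          congr 1
          push_cast
          ring
        have hY : 0 < t ^ (2 * q) := by positivity
        rw [growthDeriv, e1, e2, e3, e4, e5, e6, hM]
        generalize t ^ (2 * q) = Y at hY ⊢
        generalize t ^ (r - 3 - 2 * q) = X
        generalize rexp (-(b * t ^ 2)) = S
        generalize rexp (p * t ^ 2) = T
        generalize b ^ (-q) = W
        by_cases hκ : κ = 0
        · simp [hκ]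
        field_simp
        ring

lemma tendsto_lintegral_growth {u : ℕ → ℂ → ℝ} (hreg : ∀ k, ContDiff ℝ 1 (u k))
    (hsupp : ∀ k, tsupport (u k) ⊆ unitDisk)
    (hE : ∀ k, ∫⁻ z in unitDisk, ENNReal.ofReal (‖gradient (u k) z‖ ^ 2) ≤ 1)
    (hvanish : ∀ ζ : ℕ → ℂ, (∀ k, ζ k ∈ unitDisk) →
      ∀ φ : ℂ → ℝ, ContDiff ℝ (⊤ : ℕ∞) φ → HasCompactSupport φ → tsupport φ ⊆ unitDisk →
      Tendsto (fun k =>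
          ∫ x in unitDisk, ⟪gradient (fun y => u k (eta (ζ k) y)) x, gradient φ x⟫)
        atTop (𝓝 0)) {C r p : ℝ} (hC : 0 < C) (hr : 2 < r) (hp0 : 0 < p) (hp : p < 4 * π) :
    Tendsto (fun k => ∫⁻ x, ENNReal.ofReal (C * |u k x| ^ r * rexp (p * |u k x| ^ 2)) ∂hypMeasure)
      atTop (𝓝 0) := by
  have hπ := pi_pos
  obtain ⟨κ, hκ0, hκ1, hκp⟩ : ∃ κ : ℝ, 0 < κ ∧ κ < 1 ∧ p < 2 * (2 * π * κ ^ 2) := by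
    obtain ⟨κ, h1, h2⟩ := exists_between (show √(p / (4 * π)) < 1 by
      rw [Real.sqrt_lt' one_pos, one_pow, div_lt_one (by positivity)]
      exact hp)
    have hκ0 : 0 < κ := (Real.sqrt_nonneg _).trans_lt h1
    refine ⟨κ, hκ0, h2, ?_⟩
    rw [Real.sqrt_lt' hκ0, div_lt_iff₀ (by positivity)] at h1
    linarith
  have hlayer : ∀ k, ∫⁻ x, ENNReal.ofReal (C * |u k x| ^ r * rexp (p * |u k x| ^ 2)) ∂hypMeasure =
      ∫⁻ t in Ioi 0, hypMeasure {x | t < |u k x|} * ENNReal.ofReal (growthDeriv C r p t) := by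
    intro k
    simp only [← integral_growthDeriv C hr p]
    refine lintegral_comp_eq_lintegral_meas_lt_mul hypMeasure (f := fun x => |u k x|)
      (ae_of_all _ fun x => abs_nonneg _) (hreg k).continuous.abs.aemeasurable
      (fun t _ => (continuous_growthDeriv C hr p).intervalIntegrable _ _) ?_
    filter_upwards [ae_restrict_mem measurableSet_Ioi] with t ht
    exact growthDeriv_nonneg hC.le hr hp0.le (le_of_lt ht)
  simp only [hlayer]
  rw [← lintegral_zero (α := ℝ) (μ := volume.restrict (Ioi 0))]
  refine tendsto_lintegral_of_dominated_convergence
    (fun t => ENNReal.ofReal ((-log (1 - rexp (-(2 * π * κ ^ 2 * t ^ 2))) / ((1 - κ) * t)) ^ 2 *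
      growthDeriv C r p t)) (fun k => ?_) (fun k => ?_) ?_ ?_
  · refine Measurable.mul (Antitone.measurable fun a b hab => measure_mono fun x hx => ?_)
      (continuous_growthDeriv C hr p).measurable.ennreal_ofReal
    exact lt_of_le_of_lt hab hx
  · filter_upwards [ae_restrict_mem measurableSet_Ioi] with t ht
    rw [ENNReal.ofReal_mul (by positivity)]
    gcongr
    exact hypMeasure_lt_abs_le_of_exp (hreg k) (hsupp k) (hE k) hκ0 hκ1 ht
  · exact (integrableOn_distribution_bound_mul_growthDeriv hC.le hr hp0.le
      (by positivity) hκp).lintegral_lt_top.ne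
  · filter_upwards [ae_restrict_mem measurableSet_Ioi] with t ht
    have h := ENNReal.Tendsto.mul_const (b := ENNReal.ofReal (growthDeriv C r p t))
      (tendsto_hypMeasure_lt_abs hreg hsupp hE hvanish ht) (Or.inr ENNReal.ofReal_ne_top)
    rwa [zero_mul] at h

/-- Cocompactness relative to the Möbius group: if `‖∇u_k‖₂ = 1` and
`u_k ∘ η_{ζ_k} ⇀ 0` for every sequence `ζ_k ∈ B`, then `∫_B F(u_k) dμ → 0` for every
continuous `F` with `|F(s)| ≤ C|s|^r e^{p s²}`, `r > 2`, `p < 4π`. -/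
theorem mobius_cocompactness (u : ℕ → ℂ → ℝ)
    (hreg : ∀ k, ContDiff ℝ 1 (u k)) (hsupp : ∀ k, tsupport (u k) ⊆ unitDisk)
    (hnorm : ∀ k, (∫ x in unitDisk, ‖gradient (u k) x‖ ^ 2) = 1)
    (hvanish : ∀ ζ : ℕ → ℂ, (∀ k, ζ k ∈ unitDisk) →
      ∀ φ : ℂ → ℝ, ContDiff ℝ (⊤ : ℕ∞) φ → HasCompactSupport φ → tsupport φ ⊆ unitDisk →
      Tendsto (fun k =>
          ∫ x in unitDisk, ⟪gradient (fun y => u k (eta (ζ k) y)) x, gradient φ x⟫)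
        atTop (𝓝 0))
    (F : ℝ → ℝ) (hF : Continuous F) (C r p : ℝ) (hC : 0 < C) (hr : 2 < r) (hp : p < 4 * π)
    (hgrowth : ∀ s : ℝ, |F s| ≤ C * |s| ^ r * Real.exp (p * s ^ 2)) :
    Tendsto (fun k => ∫ x in unitDisk, F (u k x) / (1 - ‖x‖ ^ 2) ^ 2) atTop (𝓝 0) := by
  have hE : ∀ k, ∫⁻ z in unitDisk, ENNReal.ofReal (‖gradient (u k) z‖ ^ 2) ≤ 1 := fun k => by
    have hi : IntegrableOn (fun x => ‖gradient (u k) x‖ ^ 2) unitDisk := by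
      by_contra h
      have := hnorm k
      rw [integral_undef h] at this
      exact zero_ne_one this
    rw [← ofReal_integral_eq_lintegral_ofReal hi (ae_of_all _ fun _ => by positivity), hnorm k,
      ENNReal.ofReal_one]
  have h := tendsto_lintegral_growth hreg hsupp hE hvanish hC hr
    (lt_max_of_lt_right one_pos) (max_lt hp (by linarith [pi_gt_three]) : max p 1 < 4 * π)
  refine tendsto_zero_iff_enorm_tendsto_zero.mpr ?_
  refine tendsto_of_tendsto_of_tendsto_of_le_of_le tendsto_const_nhds h (fun _ => zero_le)
    fun k => ?_
  refine (enorm_integral_le_lintegral_enorm _).trans ?_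
  rw [lintegral_hypMeasure]
  refine lintegral_mono fun x => ?_
  rw [← ENNReal.ofReal_mul (by positivity), Real.enorm_eq_ofReal_abs, abs_div,
    abs_of_nonneg (by positivity : 0 ≤ (1 - ‖x‖ ^ 2) ^ 2), div_eq_inv_mul, one_div]
  gcongr
  refine (hgrowth _).trans ?_
  rw [sq_abs]
  gcongr
  exact le_max_left _ _
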